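/- (Hamiltonization of the rolling disc over a circle of variable radius.) Let m, r, I, g > 0, let a : ℝ → ℝ be smooth with 0 < a(t) < a_max for all t, and set α := I/(mr²+I). Let u(t) := ∫₀^t a(s)^{-α} ds, let z : ℝ → ℝ be the inverse of u, and 𝒩(τ) := a(z(τ))^{-α} = 1/z'(τ). Then a twice differentiable curve φ : ℝ → ℝ satisfies the reduced equation (mr²+I)a(t)²φ̈ + 2(mr²+I)a(t)ȧ(t)φ̇ = −mrg a(t) cos φ + I a(t)ȧ(t) φ̇ for all t if and only if Φ(τ) := φ(z(τ)) satisfies the Euler–Lagrange equation (d/dτ)((mr²+I) a(z(τ))² 𝒩(τ)² Φ'(τ)) = −mrg a(z(τ)) cos Φ(τ) for all τ, i.e. Φ solves the Lagrangian system with Lagrangian L*_c(φ,φ',τ) = ½(mr²+I)a(z(τ))²(𝒩(τ)φ')² − mrg a(z(τ)) sin φ. -/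

import Mathlib

open scoped ContDiff

/-! Since `d/dτ = 𝒩⁻¹ d/dt`, the momentum `μ 𝒩² Φ'` of a system with variable mass `μ` equals
`μ 𝒩 φ̇`, and its `τ`-derivative is `μ φ̈ + (μ̇ + μ 𝒩̇/𝒩) φ̇`: the change of time contributes
exactly the velocity-dependent term `μ (𝒩̇/𝒩) φ̇`. For `M = mr² + I`, `μ = M a²` and
`𝒩 = a^{-α}`, one has `𝒩̇/𝒩 = -α ȧ/a`, so this term is `-M α a ȧ φ̇ = -I a ȧ φ̇`, absorbing
the velocity-dependent force `I a ȧ φ̇` of the reduced equation. -/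

theorem hasDerivAt_of_rightInverse_of_deriv_pos {f f' g : ℝ → ℝ}
    (hf : ∀ x, HasDerivAt f (f' x) x) (hf' : ∀ x, 0 < f' x) (hg : Function.RightInverse g f)
    (y : ℝ) : HasDerivAt g (f' (g y))⁻¹ y := by
  have hmono : StrictMono f := strictMono_of_hasDerivAt_pos hf hf'
  have hcont : Continuous g := (hmono.orderIsoOfRightInverse f g hg).symm.continuous
  exact .of_local_left_inverse hcont.continuousAt (hf (g y)) (hf' (g y)).ne' (.of_forall hg)

theorem logDeriv_rpow_const {f : ℝ → ℝ} {x : ℝ} (hf : DifferentiableAt ℝ f x) (hx : 0 < f x)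
    (p : ℝ) : logDeriv (fun y => f y ^ p) x = p * logDeriv f x := by
  have hfp : f x ^ p ≠ 0 := (Real.rpow_pos_of_pos hx p).ne'
  rw [logDeriv_apply, logDeriv_apply, deriv_rpow_const hf (.inl hx.ne'),
    Real.rpow_sub_one hx.ne']
  field_simp

section TimeChange

variable {z φ : ℝ → ℝ}

theorem momentum_comp_timeChange {N : ℝ → ℝ} {σ : ℝ} (μ : ℝ → ℝ) (hN : N (z σ) ≠ 0)
    (hz : HasDerivAt z (N (z σ))⁻¹ σ) (hφ : DifferentiableAt ℝ φ (z σ)) :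
    μ (z σ) * N (z σ) ^ 2 * deriv (fun σ' => φ (z σ')) σ
      = μ (z σ) * (N (z σ) * deriv φ (z σ)) := by
  have hΦ : deriv (fun σ' => φ (z σ')) σ = deriv φ (z σ) * (N (z σ))⁻¹ :=
    (hφ.hasDerivAt.comp σ hz).deriv
  rw [hΦ]
  field_simp

theorem deriv_momentum_comp_timeChange {μ N : ℝ → ℝ} {τ : ℝ} (hN : ∀ t, N t ≠ 0)
    (hz : ∀ σ, HasDerivAt z (N (z σ))⁻¹ σ) (hμ : DifferentiableAt ℝ μ (z τ))
    (hNd : DifferentiableAt ℝ N (z τ)) (hφ : Differentiable ℝ φ)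
    (hφ' : DifferentiableAt ℝ (deriv φ) (z τ)) :
    deriv (fun σ => μ (z σ) * N (z σ) ^ 2 * deriv (fun σ' => φ (z σ')) σ) τ
      = μ (z τ) * deriv (deriv φ) (z τ)
        + (deriv μ (z τ) + μ (z τ) * logDeriv N (z τ)) * deriv φ (z τ) := by
  simp only [fun σ => momentum_comp_timeChange μ (hN (z σ)) (hz σ) (hφ (z σ))]
  have hmomentum := hμ.hasDerivAt.mul (hNd.hasDerivAt.mul hφ'.hasDerivAt)
  refine (hmomentum.comp τ (hz τ)).deriv.trans ?_
  have hNτ : N (z τ) ≠ 0 := hN (z τ)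
  simp only [Pi.mul_apply, logDeriv_apply]
  field_simp
  ring

theorem deriv_momentum_comp_timeChange_rpow {a : ℝ → ℝ} {α : ℝ} (M : ℝ)
    (ha : Differentiable ℝ a) (hpos : ∀ t, 0 < a t)
    (hz : ∀ σ, HasDerivAt z (a (z σ) ^ (-α))⁻¹ σ)
    (hφ : Differentiable ℝ φ) (hφ' : Differentiable ℝ (deriv φ)) (τ : ℝ) :
    deriv (fun σ => M * a (z σ) ^ 2 * (a (z σ) ^ (-α)) ^ 2 * deriv (fun σ' => φ (z σ')) σ) τ
      = M * a (z τ) ^ 2 * deriv (deriv φ) (z τ)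
        + (2 - α) * M * a (z τ) * deriv a (z τ) * deriv φ (z τ) := by
  have ha₀ : a (z τ) ≠ 0 := (hpos (z τ)).ne'
  have hmass : HasDerivAt (fun t => M * a t ^ 2) (M * (2 * a (z τ) * deriv a (z τ))) (z τ) := by
    simpa using ((ha (z τ)).hasDerivAt.pow 2).const_mul M
  rw [deriv_momentum_comp_timeChange (μ := fun t => M * a t ^ 2) (N := fun t => a t ^ (-α))
    (fun t => (Real.rpow_pos_of_pos (hpos t) _).ne') hz hmass.differentiableAt
    ((ha (z τ)).rpow_const (Or.inl ha₀)) hφ (hφ' (z τ)),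
    hmass.deriv, logDeriv_rpow_const (ha (z τ)) (hpos (z τ)), logDeriv_apply]
  field_simp
  ring

end TimeChange

theorem rolling_disc_hamiltonization_general {M I α : ℝ} (hM : M ≠ 0) (hα : α = I / M)
    {a : ℝ → ℝ} (ha : Differentiable ℝ a) (hpos : ∀ t, 0 < a t)
    {u : ℝ → ℝ} (hu : ∀ t, u t = ∫ s in (0 : ℝ)..t, a s ^ (-α))
    {z : ℝ → ℝ} (hz : Function.RightInverse z u)
    {φ : ℝ → ℝ} (hφ : Differentiable ℝ φ) (hφ' : Differentiable ℝ (deriv φ)) (Q : ℝ → ℝ) :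
    (∀ t, M * a t ^ 2 * deriv (deriv φ) t + 2 * M * a t * deriv a t * deriv φ t
      = Q t + I * a t * deriv a t * deriv φ t)
    ↔
    (∀ τ, deriv (fun σ =>
          M * a (z σ) ^ 2 * (a (z σ) ^ (-α)) ^ 2 * deriv (fun σ' => φ (z σ')) σ) τ
        = Q (z τ)) := by
  have hN_pos : ∀ t, 0 < a t ^ (-α) := fun t => Real.rpow_pos_of_pos (hpos t) _
  have hN_cont : Continuous fun t => a t ^ (-α) :=
    ha.continuous.rpow_const fun t => Or.inl (hpos t).ne'
  have hu' : ∀ t, HasDerivAt u (a t ^ (-α)) t := fun t =>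
    funext hu ▸ (hN_cont.integral_hasStrictDerivAt 0 t).hasDerivAt
  have hz' : ∀ τ, HasDerivAt z (a (z τ) ^ (-α))⁻¹ τ :=
    hasDerivAt_of_rightInverse_of_deriv_pos hu' hN_pos hz
  have hz_surj : Function.Surjective z :=
    (hz.leftInverse_of_injective
      (strictMono_of_hasDerivAt_pos hu' hN_pos).injective).surjective
  have hI : I = M * α := by rw [hα, mul_div_cancel₀ I hM]
  rw [hz_surj.forall]
  refine forall_congr' fun τ => ?_
  rw [deriv_momentum_comp_timeChange_rpow M ha hpos hz' hφ hφ', hI]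
  constructor <;> intro h <;> linear_combination h

/-- Hamiltonization of the rolling of a balanced disc of radius `r`, mass `m` and moment
of inertia `I` over a vertical circle of variable radius, `a(t) = (R(t)+r)/r`.  With
`α = I/(mr²+I)`, `u(t) = ∫₀^t a(s)^{-α} ds`, `z = u⁻¹` and `𝒩(τ) = a(z(τ))^{-α}`, a curve
`φ` satisfies the reduced equation
`(mr²+I)a²φ̈ + 2(mr²+I)aȧφ̇ = −mrg a cos φ + Iaȧφ̇`
if and only if `Φ(τ) = φ(z(τ))` satisfies the Euler–Lagrange equation
`(d/dτ)((mr²+I)a(z(τ))²𝒩(τ)²Φ') = −mrg a(z(τ)) cos Φ` of the Lagrangian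
`L*_c = ½(mr²+I)a(z(τ))²(𝒩(τ)φ')² − mrg a(z(τ)) sin φ`. -/
theorem rolling_disc_hamiltonization
    (m r I g amax : ℝ) (hm : 0 < m) (hr : 0 < r) (hI : 0 < I) (hg : 0 < g)
    (a : ℝ → ℝ) (ha : ContDiff ℝ ∞ a) (hbound : ∀ t, 0 < a t ∧ a t < amax)
    (α : ℝ) (hα : α = I / (m * r ^ 2 + I))
    (u : ℝ → ℝ) (hu : ∀ t, u t = ∫ s in (0 : ℝ)..t, a s ^ (-α))
    (z : ℝ → ℝ) (hz1 : ∀ t, z (u t) = t) (hz2 : ∀ τ, u (z τ) = τ)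
    (φ : ℝ → ℝ) (hφ1 : Differentiable ℝ φ) (hφ2 : Differentiable ℝ (deriv φ)) :
    (∀ t, (m * r ^ 2 + I) * a t ^ 2 * deriv (deriv φ) t
        + 2 * (m * r ^ 2 + I) * a t * deriv a t * deriv φ t
      = -(m * r * g * a t * Real.cos (φ t)) + I * a t * deriv a t * deriv φ t)
    ↔
    (∀ τ, deriv (fun σ =>
          (m * r ^ 2 + I) * a (z σ) ^ 2 * (a (z σ) ^ (-α)) ^ 2
            * deriv (fun σ' => φ (z σ')) σ) τ
        = -(m * r * g * a (z τ) * Real.cos (φ (z τ)))) := by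
  exact rolling_disc_hamiltonization_general (by positivity) hα (ha.differentiable (by simp))
    (fun t => (hbound t).1) hu hz2 hφ1 hφ2 fun t => -(m * r * g * a t * Real.cos (φ t))
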